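/- Let S ⊆ ℝⁿ be a nonempty closed set and let n < p < ∞. Then there exists a constant C depending only on n and p such that for every continuously differentiable function F : ℝⁿ → ℝ with ∫_{ℝⁿ} ‖∇F(x)‖^p dx < ∞, the restriction f := F|_S satisfies ( ∫_{ℝⁿ} f^♯_{∞,S}(x)^p dx )^{1/p} ≤ C ( ∫_{ℝⁿ} ‖∇F(x)‖^p dx )^{1/p}. (This is the necessity part of Theorem 1.4(i); the paper states it for continuous functions in the homogeneous Sobolev space L_p^1(ℝⁿ), here taken to be C¹ with p-integrable gradient.) -/

import Mathlib

/-!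
Fix `q` with `n < q < p` and write `g = ‖∇F‖`.

For `y` in a cube `Q` of radius `r`, integrating `g` along the segments from `y` to the points
`w ∈ Q` bounds the mean of `|F y - F w|` over `Q` by a multiple of `r` times
`∫₀¹ (mean over w ∈ Q of g (y + t (w - y))) dt`. By Hölder's inequality and the change of variables
`w ↦ y + t (w - y)`, which maps `Q` into itself with Jacobian `tⁿ`, the inner mean is at most
`t ^ (-n / q)` times the `L^q` mean of `g` over `Q`, and `t ^ (-n / q)` is integrable on `(0, 1]`
because `n < q`. This is Morrey's inequality (`morrey`). Comparing both `y` and `z` with the points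
of `Q` gives the pointwise bound `f^♯ ≤ C (M (g ^ q)) ^ (1 / q)` (`sharpMax_le`), where `M` is the
centred maximal function over cubes.

Since `p / q > 1`, the Hardy–Littlewood theorem `‖M h‖_{p/q} ≤ C ‖h‖_{p/q}` (`strong_type`), applied
to `h = g ^ q`, finishes the proof. It is proved by interpolation: the Vitali covering lemma
gives the weak type (1,1) estimate (`weak_type`), which is applied at each level `t` to the part of
`h` exceeding `t / 2` (`weak_type_truncated`) and integrated over `t` by the layer-cake formula.

The sharp maximal function itself need not be shown measurable: the lower Lebesgue integral is
monotone, and only `M` enters the layer-cake formula.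
-/

open MeasureTheory Metric Set
open scoped ENNReal

/-- A closed cube `Q(c, r)` in `ℝⁿ` (with the uniform norm): center `c`, radius `r`. -/
structure PCube (n : ℕ) where
  c : Fin n → ℝ
  r : ℝ

namespace PCube

variable {n : ℕ}

/-- The underlying set of the cube. -/
def toSet (Q : PCube n) : Set (Fin n → ℝ) := Metric.closedBall Q.c Q.r

/-- The diameter `2r` of the cube (uniform norm). -/
def diam (Q : PCube n) : ℝ := 2 * Q.r

/-- Dilation `λQ` of the cube about its center. -/
def scale (Q : PCube n) (l : ℝ) : PCube n := ⟨Q.c, l * Q.r⟩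

/-- The volume `|Q| = (2r)ⁿ` of the cube. -/
def vol (Q : PCube n) : ℝ := (2 * Q.r) ^ n

end PCube

/-- Distance between two subsets of `ℝⁿ`. -/
noncomputable def setDist {n : ℕ} (A B : Set (Fin n → ℝ)) : ℝ :=
  sInf (Set.image2 dist A B)

/-- Oscillation `E(f; U)` of `f` on `U`. -/
noncomputable def osc {n : ℕ} (f : (Fin n → ℝ) → ℝ) (U : Set (Fin n → ℝ)) : ℝ :=
  sSup ((fun q : (Fin n → ℝ) × (Fin n → ℝ) => |f q.1 - f q.2|) '' (U ×ˢ U))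

/-- `Q` is `α`-porous with respect to `S`. -/
def Porous {n : ℕ} (α : ℝ) (S : Set (Fin n → ℝ)) (Q : PCube n) : Prop :=
  ∃ Q' : PCube n, 0 < Q'.r ∧ Q'.toSet ⊆ Q.toSet \ S ∧ α * Q.diam ≤ Q'.diam

/-- `‖∇F(x)‖ = max_i |∂F/∂x_i(x)|`. -/
noncomputable def gradNorm {n : ℕ} (F : (Fin n → ℝ) → ℝ) (x : Fin n → ℝ) : ℝ :=
  ‖fun i : Fin n => fderiv ℝ F x (Pi.single i 1)‖

/-- A packing: a finite family of nondegenerate, pairwise disjoint cubes. -/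
def IsPacking {n : ℕ} (π : Finset (PCube n)) : Prop :=
  (∀ Q ∈ π, 0 < Q.r) ∧ ∀ Q ∈ π, ∀ Q' ∈ π, Q ≠ Q' → Disjoint Q.toSet Q'.toSet

/-- All cubes in the family have equal diameter. -/
def EqualDiam {n : ℕ} (π : Finset (PCube n)) : Prop :=
  ∀ Q ∈ π, ∀ Q' ∈ π, Q.r = Q'.r

/-- The functional `A_p(f; t : S)` (via local oscillations). -/
noncomputable def Ap {n : ℕ} (p : ℝ) (f : (Fin n → ℝ) → ℝ) (t : ℝ)
    (S : Set (Fin n → ℝ)) : ℝ≥0∞ :=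
  ⨆ π ∈ {π : Finset (PCube n) | IsPacking π ∧ EqualDiam π ∧ (∀ Q ∈ π, Q.c ∈ S) ∧
      ∀ Q ∈ π, Q.diam ≤ t},
    ENNReal.ofReal ((∑ Q ∈ π, Q.vol * osc f (Q.toSet ∩ S) ^ p) ^ (1 / p))

/-- `𝔸_{p,α}(f; t : S)`: as `A_p` but over `α`-porous packings. -/
noncomputable def ApPorous {n : ℕ} (p α : ℝ) (f : (Fin n → ℝ) → ℝ) (t : ℝ)
    (S : Set (Fin n → ℝ)) : ℝ≥0∞ :=
  ⨆ π ∈ {π : Finset (PCube n) | IsPacking π ∧ EqualDiam π ∧ (∀ Q ∈ π, Q.c ∈ S) ∧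
      (∀ Q ∈ π, Q.diam ≤ t) ∧ ∀ Q ∈ π, Porous α S Q},
    ENNReal.ofReal ((∑ Q ∈ π, Q.vol * osc f (Q.toSet ∩ S) ^ p) ^ (1 / p))

/-- `E(f; Q)_{L_p(μ)}`. -/
noncomputable def oscLp {n : ℕ} (μ : Measure (Fin n → ℝ)) (p : ℝ) (f : (Fin n → ℝ) → ℝ)
    (Q : PCube n) : ℝ≥0∞ :=
  ((μ Q.toSet)⁻¹ ^ 2 *
    ∫⁻ x in Q.toSet, ∫⁻ y in Q.toSet, ENNReal.ofReal (|f x - f y| ^ p) ∂μ ∂μ) ^ (1 / p)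

/-- `A_p(f; t : S)_{L_p(μ)}`. -/
noncomputable def ApLp {n : ℕ} (μ : Measure (Fin n → ℝ)) (p : ℝ) (f : (Fin n → ℝ) → ℝ)
    (t : ℝ) (S : Set (Fin n → ℝ)) : ℝ≥0∞ :=
  ⨆ π ∈ {π : Finset (PCube n) | IsPacking π ∧ EqualDiam π ∧ (∀ Q ∈ π, Q.c ∈ S) ∧
      ∀ Q ∈ π, Q.diam ≤ t},
    (∑ Q ∈ π, ENNReal.ofReal Q.vol * oscLp μ p f Q ^ p) ^ (1 / p)

/-- `𝒜_{p,α}(f; t : S)_{L_p(μ)}`: over `α`-porous packings centered at the boundary of `S`. -/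
noncomputable def AcalLp {n : ℕ} (μ : Measure (Fin n → ℝ)) (p α : ℝ) (f : (Fin n → ℝ) → ℝ)
    (t : ℝ) (S : Set (Fin n → ℝ)) : ℝ≥0∞ :=
  ⨆ π ∈ {π : Finset (PCube n) | IsPacking π ∧ EqualDiam π ∧ (∀ Q ∈ π, Q.c ∈ frontier S) ∧
      (∀ Q ∈ π, Q.diam ≤ t) ∧ ∀ Q ∈ π, Porous α S Q},
    (∑ Q ∈ π, ENNReal.ofReal Q.vol * oscLp μ p f Q ^ p) ^ (1 / p)

/-- `ρ_{α,S}(x,y) ∈ [0,∞]`. -/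
noncomputable def rho {n : ℕ} (α : ℝ) (S : Set (Fin n → ℝ)) (x y : Fin n → ℝ) : ℝ≥0∞ :=
  sInf {d : ℝ≥0∞ | ∃ Q : PCube n, 0 < Q.r ∧ x ∈ Q.toSet ∧ y ∈ Q.toSet ∧
    (Q.scale α).toSet ⊆ Sᶜ ∧ d = ENNReal.ofReal Q.diam}

/-- The sharp maximal function `f^♯_{∞,S}`. -/
noncomputable def sharpMax {n : ℕ} (S : Set (Fin n → ℝ)) (f : (Fin n → ℝ) → ℝ)
    (x : Fin n → ℝ) : ℝ :=
  sSup {v : ℝ | ∃ r : ℝ, 0 < r ∧ ∃ y ∈ Metric.closedBall x r ∩ S,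
    ∃ z ∈ Metric.closedBall x r ∩ S, v = |f y - f z| / r}

/-- `supp μ = S`. -/
def IsSuppOn {n : ℕ} (μ : Measure (Fin n → ℝ)) (S : Set (Fin n → ℝ)) : Prop :=
  μ Sᶜ = 0 ∧ ∀ x ∈ S, ∀ r : ℝ, 0 < r → 0 < μ (Metric.closedBall x r)

/-- The doubling condition (1.12). -/
def Doubling {n : ℕ} (μ : Measure (Fin n → ℝ)) (S : Set (Fin n → ℝ)) (cμ : ℝ) : Prop :=
  ∀ x ∈ S, ∀ r : ℝ, 0 < r → r ≤ 1 / 2 →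
    μ (Metric.closedBall x (2 * r)) ≤ ENNReal.ofReal cμ * μ (Metric.closedBall x r)

/-- Condition `(D_n)` (1.11). -/
def CondDn {n : ℕ} (μ : Measure (Fin n → ℝ)) (S : Set (Fin n → ℝ)) (Cμ : ℝ) : Prop :=
  ∀ x ∈ S, ∀ r : ℝ, 0 < r → r ≤ 1 → ∀ k : ℝ, 1 ≤ k → k ≤ 1 / r →
    μ (Metric.closedBall x (k * r)) ≤ ENNReal.ofReal (Cμ * k ^ n) * μ (Metric.closedBall x r)

/-- The normalization condition (1.13). -/
def Normalized {n : ℕ} (μ : Measure (Fin n → ℝ)) (S : Set (Fin n → ℝ)) (C' C'' : ℝ) : Prop :=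
  ∀ x ∈ S, ENNReal.ofReal C' ≤ μ (Metric.closedBall x 1) ∧
    μ (Metric.closedBall x 1) ≤ ENNReal.ofReal C''

/-- The double integral over `{‖x−y‖ < t}` (before taking the `1/p` power). -/
noncomputable def I1 {n : ℕ} (μ : Measure (Fin n → ℝ)) (p : ℝ) (S : Set (Fin n → ℝ))
    (f : (Fin n → ℝ) → ℝ) (t : ℝ) : ℝ≥0∞ :=
  ∫⁻ x in S, ∫⁻ y in S,
    ({y : Fin n → ℝ | dist x y < t}.indicator
      (fun y => ENNReal.ofReal (|f x - f y| ^ p) * ENNReal.ofReal (t ^ ((n : ℝ) - p)) *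
        ((μ (Metric.closedBall x t))⁻¹) ^ 2)) y ∂μ ∂μ

/-- The double integral over `{ρ_{α,S}(x,y) < δ}` (before taking the `1/p` power). -/
noncomputable def I2 {n : ℕ} (μ : Measure (Fin n → ℝ)) (p α : ℝ) (S : Set (Fin n → ℝ))
    (f : (Fin n → ℝ) → ℝ) (δ : ℝ) : ℝ≥0∞ :=
  ∫⁻ x in S, ∫⁻ y in S,
    ({y : Fin n → ℝ | rho α S x y < ENNReal.ofReal δ}.indicator
      (fun y => ENNReal.ofReal (|f x - f y| ^ p) * rho α S x y ^ ((n : ℝ) - p) *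
        ((μ (Metric.closedBall x (rho α S x y).toReal))⁻¹) ^ 2)) y ∂μ ∂μ

/-! ### The Hardy–Littlewood maximal theorem -/

/-- The average of `h` over the cube `Q(x, r)`. -/
noncomputable def cubeAvg {n : ℕ} (h : (Fin n → ℝ) → ℝ≥0∞) (x : Fin n → ℝ) (r : ℝ) : ℝ≥0∞ :=
  (∫⁻ y in closedBall x r, h y) / volume (closedBall x r)

/-- The centred Hardy–Littlewood maximal function over cubes. Only rational radii are used, so that
measurability is immediate; this changes the function by a factor of at most `2 ^ n`. -/
noncomputable def cubeMax {n : ℕ} (h : (Fin n → ℝ) → ℝ≥0∞) (x : Fin n → ℝ) : ℝ≥0∞ :=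
  ⨆ k : {q : ℚ // 0 < q}, cubeAvg h x (k : ℚ)

lemma volume_cube {n : ℕ} (x : Fin n → ℝ) {r : ℝ} (hr : 0 ≤ r) :
    volume (closedBall x r) = ENNReal.ofReal ((2 * r) ^ n) := by
  simpa using Real.volume_pi_closedBall x hr

lemma volume_cube_ne_zero {n : ℕ} (x : Fin n → ℝ) {r : ℝ} (hr : 0 < r) :
    volume (closedBall x r) ≠ 0 := by
  rw [volume_cube x hr.le]
  simpa using by positivity

lemma volume_cube_ne_top {n : ℕ} (x : Fin n → ℝ) (r : ℝ) :
    volume (closedBall x r) ≠ ∞ := measure_closedBall_lt_top.ne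

lemma measurable_cubeMax {n : ℕ} {h : (Fin n → ℝ) → ℝ≥0∞} (hh : Measurable h) :
    Measurable (cubeMax h) := by
  refine Measurable.iSup fun k => ?_
  have hk : (0 : ℝ) ≤ ((k : ℚ) : ℝ) := by exact_mod_cast k.2.le
  simp only [cubeAvg, volume_cube _ hk]
  refine Measurable.div_const ?_ _
  have : ∀ x : Fin n → ℝ, ∫⁻ y in closedBall x ((k : ℚ) : ℝ), h y =
      ∫⁻ y, {q : (Fin n → ℝ) × (Fin n → ℝ) | dist q.2 q.1 ≤ ((k : ℚ) : ℝ)}.indicator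
        (fun q => h q.2) (x, y) := by
    intro x
    rw [← lintegral_indicator measurableSet_closedBall]
    rfl
  simp only [this]
  refine Measurable.lintegral_prod_right' (f := fun q => _) ?_
  refine Measurable.indicator (hh.comp measurable_snd) ?_
  exact measurableSet_le (measurable_snd.dist measurable_fst) measurable_const

/-- Weak type (1,1) of the maximal function, from the Vitali covering lemma with enlargement
factor `4`. -/
lemma weak_type {n : ℕ} (hn : n ≠ 0) (h : (Fin n → ℝ) → ℝ≥0∞) {t : ℝ} (ht : 0 < t) :
    volume {x | ENNReal.ofReal t < cubeMax h x} ≤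
      ENNReal.ofReal (4 ^ n) / ENNReal.ofReal t * ∫⁻ x, h x := by
  set I := ∫⁻ x, h x with hI
  have ht0 : ENNReal.ofReal t ≠ 0 := by simpa using ht
  by_cases hIt : I = ∞
  · rw [hIt, ENNReal.mul_top]
    · exact le_top
    · simp [ENNReal.div_eq_zero_iff]
  set A := {x | ENNReal.ofReal t < cubeMax h x}
  have hA : ∀ x : Fin n → ℝ, ∃ r : ℝ, x ∈ A → 0 < r ∧
      ENNReal.ofReal t * volume (closedBall x r) ≤ ∫⁻ y in closedBall x r, h y := by
    intro x
    by_cases hx : x ∈ A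
    · obtain ⟨k, hk⟩ := lt_iSup_iff.1 (show ENNReal.ofReal t < cubeMax h x from hx)
      have hk0 : (0 : ℝ) < ((k : ℚ) : ℝ) := by exact_mod_cast k.2
      refine ⟨((k : ℚ) : ℝ), fun _ => ⟨hk0, ?_⟩⟩
      exact (ENNReal.le_div_iff_mul_le (.inl (volume_cube_ne_zero x hk0))
        (.inl (volume_cube_ne_top x _))).1 hk.le
    · exact ⟨0, fun h => absurd h hx⟩
  choose ρ hρ using hA
  have hbd : ∀ x ∈ A, ρ x ≤ max 1 (I / ENNReal.ofReal t).toReal := by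
    intro x hx
    obtain ⟨h0, h1⟩ := hρ x hx
    by_cases h2 : ρ x ≤ 1
    · exact h2.trans (le_max_left _ _)
    push Not at h2
    refine le_trans ?_ (le_max_right _ _)
    have h3 : ENNReal.ofReal ((2 * ρ x) ^ n) ≤ I / ENNReal.ofReal t := by
      rw [ENNReal.le_div_iff_mul_le (.inl ht0) (.inl ENNReal.ofReal_ne_top), mul_comm,
        ← volume_cube x h0.le]
      exact h1.trans (setLIntegral_le_lintegral _ _)
    have h4 := (ENNReal.ofReal_le_iff_le_toReal (ENNReal.div_ne_top hIt ht0)).1 h3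
    have h5 : 2 * ρ x ≤ (2 * ρ x) ^ n := le_self_pow₀ (by linarith) hn
    linarith
  obtain ⟨u, huA, hdisj, hcov⟩ := Vitali.exists_disjoint_subfamily_covering_enlargement_closedBall
    A id ρ _ hbd 4 (by norm_num)
  have hcount : u.Countable := hdisj.countable_of_nonempty_interior fun x hx => by
    rw [interior_closedBall _ (hρ x (huA hx)).1.ne']
    exact ⟨x, mem_ball_self (hρ x (huA hx)).1⟩
  have hsub : A ⊆ ⋃ b ∈ u, closedBall b (4 * ρ b) := by
    intro x hx
    obtain ⟨b, hb, hbs⟩ := hcov x hx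
    exact mem_biUnion hb (hbs (mem_closedBall_self (hρ x hx).1.le))
  calc volume A ≤ ∑' b : u, volume (closedBall (b : Fin n → ℝ) (4 * ρ b)) :=
        (measure_mono hsub).trans (measure_biUnion_le _ hcount _)
    _ ≤ ∑' b : u, ENNReal.ofReal (4 ^ n) / ENNReal.ofReal t *
          ∫⁻ y in closedBall (b : Fin n → ℝ) (ρ b), h y := by
        refine ENNReal.tsum_le_tsum fun b => ?_
        obtain ⟨h0, h1⟩ := hρ b (huA b.2)
        rw [volume_cube _ (by positivity), show 2 * (4 * ρ b) = 4 * (2 * ρ b) by ring, mul_pow,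
          ENNReal.ofReal_mul (by positivity), ← volume_cube (b : Fin n → ℝ) h0.le,
          div_eq_mul_inv, mul_assoc]
        gcongr
        rw [mul_comm, ← div_eq_mul_inv,
          ENNReal.le_div_iff_mul_le (.inl ht0) (.inl ENNReal.ofReal_ne_top), mul_comm]
        exact h1
    _ = ENNReal.ofReal (4 ^ n) / ENNReal.ofReal t *
          ∫⁻ y in ⋃ b ∈ u, closedBall b (ρ b), h y := by
        rw [ENNReal.tsum_mul_left, lintegral_biUnion (s := fun b => closedBall b (ρ b)) hcount
          (fun _ _ => measurableSet_closedBall) hdisj]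
    _ ≤ _ := by gcongr; exact setLIntegral_le_lintegral _ _

/-- The weak type estimate with the integral restricted to where `g` is at least half the level:
the part of `g` below `t / 2` contributes at most `t / 2` to every average. -/
lemma weak_type_truncated {n : ℕ} (hn : n ≠ 0) {g : (Fin n → ℝ) → ℝ} (hg : Measurable g)
    {t : ℝ} (ht : 0 < t) :
    volume {x | ENNReal.ofReal t < cubeMax (fun y => ENNReal.ofReal (g y)) x} ≤
      ENNReal.ofReal (4 ^ n) / ENNReal.ofReal (t / 2) *
        ∫⁻ x in {x | t < 2 * g x}, ENNReal.ofReal (g x) := by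
  have hm : MeasurableSet {x | t < 2 * g x} := measurableSet_lt measurable_const (hg.const_mul 2)
  rw [← lintegral_indicator hm]
  refine le_trans (measure_mono fun x hx => ?_) (weak_type hn _ (half_pos ht))
  obtain ⟨k, hk⟩ := lt_iSup_iff.1 (show ENNReal.ofReal t < cubeMax _ x from hx)
  have hk0 : (0 : ℝ) < ((k : ℚ) : ℝ) := by exact_mod_cast k.2
  refine lt_of_lt_of_le ?_ (le_iSup (fun k : {q : ℚ // 0 < q} => cubeAvg _ x ((k : ℚ) : ℝ)) k)
  set B := closedBall x ((k : ℚ) : ℝ) with hB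
  have hB0 : volume B ≠ 0 := volume_cube_ne_zero x hk0
  have hBt : volume B ≠ ∞ := volume_cube_ne_top x _
  by_contra! hle
  refine hk.not_ge ?_
  have hsplit : ∫⁻ y in B, ENNReal.ofReal (g y) ≤
      (∫⁻ y in B, {x | t < 2 * g x}.indicator (fun x => ENNReal.ofReal (g x)) y) +
        ENNReal.ofReal (t / 2) * volume B := by
    rw [← setLIntegral_const, ← lintegral_add_right _ measurable_const]
    refine lintegral_mono fun y => ?_
    by_cases hy : t < 2 * g y
    · simp [indicator, hy]
    · simp only [indicator, mem_ofPred_eq, hy, if_false, zero_add]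
      exact ENNReal.ofReal_le_ofReal (by linarith)
  unfold cubeAvg at hle ⊢
  calc _ ≤ ((∫⁻ y in B, {x | t < 2 * g x}.indicator (fun x => ENNReal.ofReal (g x)) y) +
        ENNReal.ofReal (t / 2) * volume B) / volume B := by gcongr
    _ ≤ ENNReal.ofReal (t / 2) + ENNReal.ofReal (t / 2) := by
        rw [ENNReal.add_div, ENNReal.mul_div_cancel_right hB0 hBt]
        gcongr
    _ = ENNReal.ofReal t := by rw [← ENNReal.ofReal_add (by positivity) (by positivity)]; simp

/-- The Hardy–Littlewood maximal theorem: strong type `(s, s)` for `s > 1`. -/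
lemma strong_type {n : ℕ} (hn : n ≠ 0) {s : ℝ} (hs : 1 < s) :
    ∃ K : ℝ≥0∞, K ≠ ∞ ∧ ∀ g : (Fin n → ℝ) → ℝ, Measurable g → (∀ x, 0 ≤ g x) →
      ∫⁻ x, cubeMax (fun y => ENNReal.ofReal (g y)) x ^ s ≤
        K * ∫⁻ x, ENNReal.ofReal (g x ^ s) := by
  have hs1 : 0 < s - 1 := by linarith
  set L : ℝ≥0∞ := ENNReal.ofReal s * ENNReal.ofReal (2 * 4 ^ n) with hL
  refine ⟨L * ((ENNReal.ofReal (s - 1))⁻¹ * ENNReal.ofReal (2 ^ (s - 1))),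
    ENNReal.mul_ne_top (ENNReal.mul_ne_top ENNReal.ofReal_ne_top ENNReal.ofReal_ne_top)
      (ENNReal.mul_ne_top (by simpa using hs) ENNReal.ofReal_ne_top), ?_⟩
  intro g hg hg0
  set M := cubeMax (fun y => ENNReal.ofReal (g y)) with hM
  have hMm : Measurable M := measurable_cubeMax hg.ennreal_ofReal
  set ν := (volume : Measure (Fin n → ℝ)).withDensity (fun x => ENNReal.ofReal (g x)) with hν
  -- The layer-cake formula for the measure `g dx` evaluates the integral over the levels.
  have hlc : ∫⁻ t in Ioi (0 : ℝ), ν {x | t < 2 * g x} * ENNReal.ofReal (t ^ (s - 1 - 1)) =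
      (ENNReal.ofReal (s - 1))⁻¹ * ENNReal.ofReal (2 ^ (s - 1)) *
        ∫⁻ x, ENNReal.ofReal (g x ^ s) := by
    have h1 := lintegral_rpow_eq_lintegral_meas_lt_mul ν (f := fun x => 2 * g x)
      (Filter.Eventually.of_forall fun x => by have := hg0 x; simp [this])
      (hg.const_mul 2).aemeasurable hs1
    have h2 : ∫⁻ x, ENNReal.ofReal ((2 * g x) ^ (s - 1)) ∂ν =
        ENNReal.ofReal (2 ^ (s - 1)) * ∫⁻ x, ENNReal.ofReal (g x ^ s) := by
      rw [hν, lintegral_withDensity_eq_lintegral_mul _ hg.ennreal_ofReal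
        ((hg.const_mul 2).pow_const _).ennreal_ofReal,
        ← lintegral_const_mul _ (hg.pow_const _).ennreal_ofReal]
      refine lintegral_congr fun x => ?_
      simp only [Pi.mul_apply]
      rw [Real.mul_rpow (by norm_num) (hg0 x), ENNReal.ofReal_mul (by positivity),
        mul_left_comm, ← ENNReal.ofReal_mul (hg0 x)]
      congr 2
      rcases (hg0 x).eq_or_lt with h | h
      · rw [← h, Real.zero_rpow (by linarith), Real.zero_rpow (by linarith), zero_mul]
      · rw [← Real.rpow_one_add' h.le (by linarith)]; ring_nf
    rw [mul_assoc, ← h2, h1, ← mul_assoc, ENNReal.inv_mul_cancel (by simpa using hs1) (by simp),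
      one_mul]
  -- Truncation at height `N` makes the maximal function real-valued for the layer-cake formula.
  have hN : ∀ N : ℕ, ∫⁻ x, (min (M x) N) ^ s ≤
      L * ((ENNReal.ofReal (s - 1))⁻¹ * ENNReal.ofReal (2 ^ (s - 1))) *
        ∫⁻ x, ENNReal.ofReal (g x ^ s) := by
    intro N
    have hfin : ∀ x, min (M x) N ≠ ∞ := fun x => ((min_le_right _ _).trans_lt (by simp)).ne
    have h1 := lintegral_rpow_eq_lintegral_meas_lt_mul (volume : Measure (Fin n → ℝ))
      (f := fun x => (min (M x) N).toReal)
      (Filter.Eventually.of_forall fun x => ENNReal.toReal_nonneg)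
      (hMm.min measurable_const).ennreal_toReal.aemeasurable (show 0 < s by linarith)
    have h2 : ∫⁻ x, (min (M x) N) ^ s = ∫⁻ x, ENNReal.ofReal ((min (M x) N).toReal ^ s) := by
      refine lintegral_congr fun x => ?_
      rw [← ENNReal.ofReal_rpow_of_nonneg ENNReal.toReal_nonneg (by linarith),
        ENNReal.ofReal_toReal (hfin x)]
    rw [h2, h1, mul_assoc, ← hlc, hL, mul_assoc]
    gcongr ENNReal.ofReal s * ?_
    rw [← lintegral_const_mul' _ _ ENNReal.ofReal_ne_top]
    refine setLIntegral_mono' measurableSet_Ioi fun t ht => ?_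
    have ht : 0 < t := ht
    have hlev : volume {x | t < (min (M x) N).toReal} ≤
        ENNReal.ofReal (4 ^ n) / ENNReal.ofReal (t / 2) * ν {x | t < 2 * g x} := by
      rw [hν, withDensity_apply _ (measurableSet_lt measurable_const (hg.const_mul 2))]
      refine le_trans (measure_mono fun x hx => ?_) (weak_type_truncated hn hg ht)
      exact ((ENNReal.ofReal_lt_iff_lt_toReal ht.le (hfin x)).2 hx).trans_le (min_le_left _ _)
    have hc : ENNReal.ofReal (4 ^ n) / ENNReal.ofReal (t / 2) * ENNReal.ofReal (t ^ (s - 1)) =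
        ENNReal.ofReal (2 * 4 ^ n) * ENNReal.ofReal (t ^ (s - 1 - 1)) := by
      rw [← ENNReal.ofReal_div_of_pos (by positivity), ← ENNReal.ofReal_mul (by positivity),
        ← ENNReal.ofReal_mul (by positivity), Real.rpow_sub_one ht.ne' (s - 1)]
      congr 1
      field_simp
    calc _ ≤ ENNReal.ofReal (4 ^ n) / ENNReal.ofReal (t / 2) * ν {x | t < 2 * g x} *
          ENNReal.ofReal (t ^ (s - 1)) := by gcongr
      _ = ENNReal.ofReal (4 ^ n) / ENNReal.ofReal (t / 2) * ENNReal.ofReal (t ^ (s - 1)) *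
          ν {x | t < 2 * g x} := by ring
      _ = _ := by rw [hc]; ring
  have hsup : ∀ x, M x ^ s = ⨆ N : ℕ, (min (M x) N) ^ s := by
    intro x
    have h1 : M x = ⨆ N : ℕ, min (M x) (N : ℝ≥0∞) := by
      rw [← inf_iSup_eq, ENNReal.iSup_natCast]; simp
    conv_lhs => rw [h1]
    exact (ENNReal.orderIsoRpow s (by linarith)).map_iSup _
  simp only [hsup]
  rw [lintegral_iSup (fun N => (hMm.min measurable_const).pow_const _)]
  · exact iSup_le hN
  · intro a b hab x
    exact ENNReal.rpow_le_rpow (min_le_min le_rfl (by exact_mod_cast hab)) (by linarith)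

/-! ### Morrey's inequality -/

lemma gradNorm_nonneg {n : ℕ} (F : (Fin n → ℝ) → ℝ) (x : Fin n → ℝ) : 0 ≤ gradNorm F x :=
  norm_nonneg _

lemma continuous_gradNorm {n : ℕ} {F : (Fin n → ℝ) → ℝ} (hF : ContDiff ℝ 1 F) :
    Continuous (gradNorm F) := by
  have h := hF.continuous_fderiv one_ne_zero
  unfold gradNorm
  fun_prop

/-- Hölder's inequality between the `ℓ¹` and uniform norms. -/
lemma abs_fderiv_apply_le {n : ℕ} (F : (Fin n → ℝ) → ℝ) (x v : Fin n → ℝ) :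
    |fderiv ℝ F x v| ≤ n * ‖v‖ * gradNorm F x := by
  have h : fderiv ℝ F x v = ∑ i, v i * fderiv ℝ F x (Pi.single i 1) := by
    conv_lhs => rw [pi_eq_sum_univ' v]
    simp [map_sum]
  rw [h]
  refine (Finset.abs_sum_le_sum_abs _ _).trans ?_
  calc ∑ i, |v i * fderiv ℝ F x (Pi.single i 1)| ≤ ∑ _i : Fin n, ‖v‖ * gradNorm F x := by
        refine Finset.sum_le_sum fun i _ => ?_
        rw [abs_mul]
        exact mul_le_mul (norm_le_pi_norm v i)
          (norm_le_pi_norm (fun i : Fin n => fderiv ℝ F x (Pi.single i 1)) i) (abs_nonneg _)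
          (norm_nonneg _)
    _ = n * ‖v‖ * gradNorm F x := by simp [mul_assoc]

/-- The increment of `F` is controlled by the integral of the gradient along the segment. -/
lemma abs_sub_le_segment {n : ℕ} {F : (Fin n → ℝ) → ℝ} (hF : ContDiff ℝ 1 F)
    (y w : Fin n → ℝ) :
    ENNReal.ofReal |F y - F w| ≤ ENNReal.ofReal (n * ‖w - y‖) *
      ∫⁻ t in Ioc (0 : ℝ) 1, ENNReal.ofReal (gradNorm F (y + t • (w - y))) := by
  have hc := hF.continuous_fderiv one_ne_zero
  have hd : ∀ t : ℝ, HasDerivAt (fun t : ℝ => F (y + t • (w - y)))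
      (fderiv ℝ F (y + t • (w - y)) (w - y)) t := by
    intro t
    have h1 : HasDerivAt (fun t : ℝ => y + t • (w - y)) (w - y) t := by
      simpa using ((hasDerivAt_id t).smul_const (w - y)).const_add y
    exact ((hF.differentiable one_ne_zero _).hasFDerivAt).comp_hasDerivAt t h1
  have hint := intervalIntegral.integral_eq_sub_of_hasDerivAt (a := 0) (b := 1)
    (fun t _ => hd t) (Continuous.intervalIntegrable (by fun_prop) _ _)
  rw [← lintegral_const_mul' _ _ ENNReal.ofReal_ne_top, abs_sub_comm]
  simp only [one_smul, zero_smul, add_zero, add_sub_cancel] at hint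
  rw [← hint, intervalIntegral.integral_of_le zero_le_one, ← Real.enorm_eq_ofReal_abs]
  refine (enorm_integral_le_lintegral_enorm _).trans (lintegral_mono fun t => ?_)
  rw [Real.enorm_eq_ofReal_abs, ← ENNReal.ofReal_mul (by positivity)]
  exact ENNReal.ofReal_le_ofReal (abs_fderiv_apply_le F _ _)

/-- Contracting a cube towards one of its points `y` by the factor `t` keeps it inside the cube,
and the change of variables costs `t⁻ⁿ`. -/
lemma lintegral_contract_le {n : ℕ} {φ : (Fin n → ℝ) → ℝ≥0∞} (hφ : Measurable φ)
    {x y : Fin n → ℝ} {r t : ℝ} (hy : y ∈ closedBall x r) (ht : t ∈ Ioc (0 : ℝ) 1) :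
    ∫⁻ w in closedBall x r, φ (y + t • (w - y)) ≤
      ENNReal.ofReal ((t ^ n)⁻¹) * ∫⁻ w in closedBall x r, φ w := by
  have hmeas : Measurable ((closedBall x r).indicator φ) :=
    hφ.indicator measurableSet_closedBall
  have hstep : ∫⁻ w in closedBall x r, φ (y + t • (w - y)) ≤
      ∫⁻ w, (closedBall x r).indicator φ (y + t • (w - y)) := by
    rw [← lintegral_indicator measurableSet_closedBall]
    refine lintegral_mono fun w => ?_
    by_cases hw : w ∈ closedBall x r
    · have hmem : y + t • (w - y) ∈ closedBall x r :=
        (convex_closedBall x r).add_smul_sub_mem hy hw ⟨ht.1.le, ht.2⟩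
      simp [indicator_of_mem hw, indicator_of_mem hmem]
    · simp [indicator_of_notMem hw]
  refine hstep.trans (le_of_eq ?_)
  have htr : ∀ w : Fin n → ℝ, y + t • (w - y) = t • w + (y - t • y) := by
    intro w; rw [smul_sub]; abel
  simp only [htr]
  rw [← lintegral_indicator measurableSet_closedBall]
  calc ∫⁻ w, (closedBall x r).indicator φ (t • w + (y - t • y))
      = ∫⁻ w, (closedBall x r).indicator φ (w + (y - t • y))
          ∂(Measure.map (fun w : Fin n → ℝ => t • w) volume) := by
        rw [lintegral_map (f := fun w => (closedBall x r).indicator φ (w + (y - t • y)))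
          (hmeas.comp (measurable_add_const _)) (measurable_const_smul t)]
    _ = ENNReal.ofReal ((t ^ n)⁻¹) * ∫⁻ w, (closedBall x r).indicator φ (w + (y - t • y)) := by
        rw [Measure.map_addHaar_smul _ ht.1.ne', lintegral_smul_measure,
          abs_of_pos (by have := ht.1; positivity)]
        simp
    _ = _ := by rw [lintegral_add_right_eq_self]

/-- Hölder's inequality on a cube, in terms of the exponent `q`. -/
lemma lintegral_le_holder {n : ℕ} {g : (Fin n → ℝ) → ℝ} (hg : Measurable g) (hg0 : ∀ x, 0 ≤ g x)
    {q : ℝ} (hq : 1 < q) (B : Set (Fin n → ℝ)) :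
    ∫⁻ w in B, ENNReal.ofReal (g w) ≤
      (∫⁻ w in B, ENNReal.ofReal (g w ^ q)) ^ (1 / q) * volume B ^ (1 - 1 / q) := by
  have h := eLpNorm'_le_eLpNorm'_mul_rpow_measure_univ (μ := volume.restrict B) (f := g)
    one_pos hq.le hg.aestronglyMeasurable
  simp only [eLpNorm'_eq_lintegral_enorm, Real.enorm_eq_ofReal_abs, abs_of_nonneg (hg0 _),
    ENNReal.rpow_one, Measure.restrict_apply_univ, div_one] at h
  refine h.trans (le_of_eq ?_)
  congr 3 with w
  rw [ENNReal.ofReal_rpow_of_nonneg (hg0 w) (by linarith)]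

/-- The constant `∫₀¹ t ^ (-n / q) dt` of Morrey's inequality; it is finite when `n < q`. -/
noncomputable def morreyInt (n : ℕ) (q : ℝ) : ℝ≥0∞ :=
  ∫⁻ t in Ioc (0 : ℝ) 1, ENNReal.ofReal (t ^ (-(n : ℝ) / q))

lemma morreyInt_ne_top {n : ℕ} {q : ℝ} (hq : 0 < q) (hnq : (n : ℝ) < q) :
    morreyInt n q ≠ ∞ := by
  have hi : IntervalIntegrable (fun t : ℝ => t ^ (-(n : ℝ) / q)) volume 0 1 := by
    apply intervalIntegral.intervalIntegrable_rpow'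
    rw [neg_div, neg_lt_neg_iff, div_lt_one hq]
    exact hnq
  have := (intervalIntegrable_iff_integrableOn_Ioc_of_le zero_le_one).1 hi
  exact (Integrable.lintegral_lt_top this).ne

/-- The mean deviation of `F` over a cube from its value at a point of the cube. -/
lemma morrey_point {n : ℕ} {F : (Fin n → ℝ) → ℝ} (hF : ContDiff ℝ 1 F) {q : ℝ} (hq : 1 < q)
    {x y : Fin n → ℝ} {r : ℝ} (hy : y ∈ closedBall x r) :
    ∫⁻ w in closedBall x r, ENNReal.ofReal |F y - F w| ≤
      ENNReal.ofReal (n * (2 * r)) * (morreyInt n q *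
        ((∫⁻ w in closedBall x r, ENNReal.ofReal (gradNorm F w ^ q)) ^ (1 / q) *
          volume (closedBall x r) ^ (1 - 1 / q))) := by
  have hgc := continuous_gradNorm hF
  have hq0 : 0 < q := by linarith
  set B := closedBall x r with hB
  set K := ∫⁻ w in B, ENNReal.ofReal (gradNorm F w ^ q) with hK
  calc ∫⁻ w in B, ENNReal.ofReal |F y - F w|
      ≤ ∫⁻ w in B, ENNReal.ofReal (n * (2 * r)) *
          ∫⁻ t in Ioc (0 : ℝ) 1, ENNReal.ofReal (gradNorm F (y + t • (w - y))) := by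
        refine setLIntegral_mono' measurableSet_closedBall fun w hw => ?_
        refine (abs_sub_le_segment hF y w).trans ?_
        gcongr
        rw [← dist_eq_norm]
        have := dist_triangle_right w y x
        have h1 : dist w x ≤ r := hw
        have h2 : dist y x ≤ r := hy
        linarith
    _ = ENNReal.ofReal (n * (2 * r)) * ∫⁻ t in Ioc (0 : ℝ) 1, ∫⁻ w in B,
          ENNReal.ofReal (gradNorm F (y + t • (w - y))) := by
        rw [lintegral_const_mul' _ _ ENNReal.ofReal_ne_top, lintegral_lintegral_swap]
        refine Measurable.aemeasurable ?_
        refine (Continuous.measurable ?_).ennreal_ofReal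
        change Continuous fun z : (Fin n → ℝ) × ℝ => gradNorm F (y + z.2 • (z.1 - y))
        fun_prop
    _ ≤ ENNReal.ofReal (n * (2 * r)) * ∫⁻ t in Ioc (0 : ℝ) 1,
          ENNReal.ofReal (t ^ (-(n : ℝ) / q)) * (K ^ (1 / q) * volume B ^ (1 - 1 / q)) := by
        gcongr ENNReal.ofReal _ * ?_
        refine setLIntegral_mono' measurableSet_Ioc fun t ht => ?_
        refine (lintegral_le_holder (g := fun w => gradNorm F (y + t • (w - y)))
          (by fun_prop) (fun w => gradNorm_nonneg _ _) hq B).trans ?_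
        rw [← mul_assoc]
        gcongr
        have hco := lintegral_contract_le (φ := fun w => ENNReal.ofReal (gradNorm F w ^ q))
          (hgc.measurable.pow_const q).ennreal_ofReal hy ht
        refine (ENNReal.rpow_le_rpow hco (by positivity)).trans (le_of_eq ?_)
        rw [ENNReal.mul_rpow_of_nonneg _ _ (by positivity),
          ENNReal.ofReal_rpow_of_nonneg (by have := ht.1; positivity) (by positivity)]
        congr 2
        rw [← Real.rpow_natCast, ← Real.rpow_neg ht.1.le, ← Real.rpow_mul ht.1.le]
        ring_nf
    _ = _ := by
        rw [lintegral_mul_const _ (by fun_prop)]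
        rfl

/-- Morrey's inequality on a cube. -/
lemma morrey {n : ℕ} {F : (Fin n → ℝ) → ℝ} (hF : ContDiff ℝ 1 F) {q : ℝ} (hq : 1 < q)
    {x y z : Fin n → ℝ} {r : ℝ} (hr : 0 < r) (hy : y ∈ closedBall x r)
    (hz : z ∈ closedBall x r) :
    ENNReal.ofReal |F y - F z| ≤
      ENNReal.ofReal (4 * n * r) * (morreyInt n q *
        cubeAvg (fun w => ENNReal.ofReal (gradNorm F w ^ q)) x r ^ (1 / q)) := by
  have hFc := hF.continuous
  set B := closedBall x r with hB
  have hB0 : volume B ≠ 0 := volume_cube_ne_zero x hr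
  have hBt : volume B ≠ ∞ := volume_cube_ne_top x _
  have hq0 : 0 < q := by linarith
  have hsum : ENNReal.ofReal |F y - F z| * volume B ≤
      (∫⁻ w in B, ENNReal.ofReal |F y - F w|) + ∫⁻ w in B, ENNReal.ofReal |F z - F w| := by
    rw [← setLIntegral_const, ← lintegral_add_left (by fun_prop)]
    refine lintegral_mono fun w => ?_
    rw [← ENNReal.ofReal_add (abs_nonneg _) (abs_nonneg _), abs_sub_comm (F z)]
    exact ENNReal.ofReal_le_ofReal (abs_sub_le _ _ _)
  have h2 := hsum.trans (add_le_add (morrey_point hF hq hy) (morrey_point hF hq hz))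
  rw [← ENNReal.le_div_iff_mul_le (.inl hB0) (.inl hBt)] at h2
  refine h2.trans (le_of_eq ?_)
  unfold cubeAvg
  rw [ENNReal.div_rpow_of_nonneg _ _ (by positivity), ← two_mul,
    ENNReal.rpow_sub _ _ hB0 hBt, ENNReal.rpow_one]
  have h4 : ENNReal.ofReal (4 * n * r) = 2 * ENNReal.ofReal (n * (2 * r)) := by
    rw [← ENNReal.ofReal_ofNat 2, ← ENNReal.ofReal_mul (by norm_num)]
    ring_nf
  rw [h4]
  simp only [div_eq_mul_inv, ← hB]
  have hinv : volume B * (volume B)⁻¹ = 1 := ENNReal.mul_inv_cancel hB0 hBt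
  set K := (∫⁻ w in B, ENNReal.ofReal (gradNorm F w ^ q)) ^ (1 * q⁻¹)
  set V := volume B ^ (1 * q⁻¹)
  calc _ = 2 * ENNReal.ofReal (n * (2 * r)) * (morreyInt n q * (K * V⁻¹)) *
        (volume B * (volume B)⁻¹) := by ring
    _ = _ := by rw [hinv, mul_one]

/-- The sharp maximal function of `F` is dominated by the maximal function of `‖∇F‖ ^ q`. -/
lemma sharpMax_le {n : ℕ} {F : (Fin n → ℝ) → ℝ} (hF : ContDiff ℝ 1 F) {q : ℝ}
    (hq : 1 < q) (S : Set (Fin n → ℝ)) (x : Fin n → ℝ) :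
    ENNReal.ofReal (sharpMax S F x) ≤ ENNReal.ofReal (8 * n) * morreyInt n q *
      cubeMax (fun w => ENNReal.ofReal (gradNorm F w ^ q)) x ^ (1 / q) := by
  have hq0 : 0 < q := by linarith
  set A := ENNReal.ofReal (8 * n) * morreyInt n q *
      cubeMax (fun w => ENNReal.ofReal (gradNorm F w ^ q)) x ^ (1 / q) with hA
  -- Where the bound is infinite the junk value of an unbounded `sSup` plays no role.
  by_cases hAt : A = ∞
  · rw [hAt]; exact le_top
  rw [ENNReal.ofReal_le_iff_le_toReal hAt]
  refine Real.sSup_le ?_ ENNReal.toReal_nonneg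
  rintro v ⟨r, hr, y, ⟨hy, -⟩, z, ⟨hz, -⟩, rfl⟩
  rw [div_le_iff₀ hr, ← ENNReal.toReal_ofReal hr.le, ← ENNReal.toReal_mul,
    ← ENNReal.ofReal_le_iff_le_toReal (ENNReal.mul_ne_top hAt ENNReal.ofReal_ne_top)]
  -- A rational radius between `r` and `2 * r`.
  obtain ⟨ρ, h1, h2⟩ := exists_rat_btwn (show r < 2 * r by linarith)
  have hρ : (0 : ℝ) < ρ := hr.trans h1
  have hρ' : 0 < ρ := by exact_mod_cast hρ
  refine (morrey hF hq hρ (closedBall_subset_closedBall h1.le hy)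
    (closedBall_subset_closedBall h1.le hz)).trans ?_
  have hle : cubeAvg (fun w => ENNReal.ofReal (gradNorm F w ^ q)) x ρ ≤
      cubeMax (fun w => ENNReal.ofReal (gradNorm F w ^ q)) x :=
    le_iSup (fun k : {q : ℚ // 0 < q} => cubeAvg _ x ((k : ℚ) : ℝ)) ⟨ρ, hρ'⟩
  calc _ ≤ ENNReal.ofReal (8 * n * r) * (morreyInt n q *
        cubeMax (fun w => ENNReal.ofReal (gradNorm F w ^ q)) x ^ (1 / q)) := by
        gcongr ENNReal.ofReal ?_ * (_ * ?_ ^ _)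
        have : (0 : ℝ) ≤ n := Nat.cast_nonneg n
        nlinarith
    _ = _ := by rw [ENNReal.ofReal_mul (by positivity), hA]; ring

/-! ### The sharp maximal estimate -/

theorem statement7 (n : ℕ) (p : ℝ) (hp : (n : ℝ) < p) :
    ∃ C : ℝ, 0 < C ∧
      ∀ S : Set (Fin n → ℝ), S.Nonempty → IsClosed S →
        ∀ F : (Fin n → ℝ) → ℝ, ContDiff ℝ 1 F →
          Integrable (fun x => gradNorm F x ^ p) volume →
          (∫⁻ x, ENNReal.ofReal (sharpMax S F x ^ p)) ^ (1 / p)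
            ≤ ENNReal.ofReal (C * (∫ x, gradNorm F x ^ p) ^ (1 / p)) := by
  have hp0 : 0 < p := lt_of_le_of_lt (Nat.cast_nonneg n) hp
  have hsharp0 : ∀ (S : Set (Fin n → ℝ)) (F : (Fin n → ℝ) → ℝ) (x : Fin n → ℝ),
      0 ≤ sharpMax S F x := by
    intro S F x
    refine Real.sSup_nonneg ?_
    rintro v ⟨r, hr, y, -, z, -, rfl⟩
    positivity
  rcases Nat.eq_zero_or_pos n with rfl | hn
  · -- In dimension zero there is only one point, and the sharp maximal function vanishes.
    refine ⟨1, one_pos, fun S _ _ F _ _ => ?_⟩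
    have h0 : ∀ x, sharpMax S F x = 0 := by
      intro x
      refine le_antisymm (Real.sSup_le ?_ le_rfl) (hsharp0 S F x)
      rintro v ⟨r, hr, y, -, z, -, rfl⟩
      simp [Subsingleton.elim y z]
    simp [h0, Real.zero_rpow hp0.ne', hp0]
  have hn1 : (1 : ℝ) ≤ n := by exact_mod_cast hn
  obtain ⟨q, hnq, hqp⟩ := exists_between hp
  have hq : 1 < q := by linarith
  have hq0 : 0 < q := by linarith
  obtain ⟨K, hK, hmax⟩ := strong_type hn.ne' (show 1 < p / q by rwa [one_lt_div hq0])
  obtain ⟨c, hct, hsharp⟩ : ∃ c : ℝ≥0∞, c ≠ ∞ ∧ ∀ F : (Fin n → ℝ) → ℝ, ContDiff ℝ 1 F →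
      ∀ S x, ENNReal.ofReal (sharpMax S F x) ≤
        c * cubeMax (fun w => ENNReal.ofReal (gradNorm F w ^ q)) x ^ (1 / q) :=
    ⟨ENNReal.ofReal (8 * n) * morreyInt n q,
      ENNReal.mul_ne_top ENNReal.ofReal_ne_top (morreyInt_ne_top hq0 hnq),
      fun F hF S x => sharpMax_le hF hq S x⟩
  have hKt : K ^ (1 / p) ≠ ∞ := ENNReal.rpow_ne_top_of_nonneg (by positivity) hK
  have hCt : c * K ^ (1 / p) ≠ ∞ := ENNReal.mul_ne_top hct hKt
  refine ⟨(c * K ^ (1 / p)).toReal + 1, by positivity, fun S _ _ F hF hint => ?_⟩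
  have hgc := continuous_gradNorm hF
  have hg0 := gradNorm_nonneg F
  set J := ∫⁻ x, ENNReal.ofReal (gradNorm F x ^ p) with hJ
  have hJI : ENNReal.ofReal (∫ x, gradNorm F x ^ p) = J :=
    ofReal_integral_eq_lintegral_ofReal hint
      (Filter.Eventually.of_forall fun x => Real.rpow_nonneg (hg0 x) p)
  have hbound : ∫⁻ x, ENNReal.ofReal (sharpMax S F x ^ p) ≤ c ^ p * (K * J) := by
    calc ∫⁻ x, ENNReal.ofReal (sharpMax S F x ^ p)
        ≤ ∫⁻ x, c ^ p *
            cubeMax (fun w => ENNReal.ofReal (gradNorm F w ^ q)) x ^ (p / q) := by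
          refine lintegral_mono fun x => ?_
          rw [← ENNReal.ofReal_rpow_of_nonneg (hsharp0 S F x) hp0.le]
          refine (ENNReal.rpow_le_rpow (hsharp F hF S x) hp0.le).trans
            (le_of_eq ?_)
          rw [ENNReal.mul_rpow_of_nonneg _ _ hp0.le, ← ENNReal.rpow_mul]
          ring_nf
      _ = c ^ p * ∫⁻ x, cubeMax (fun w => ENNReal.ofReal (gradNorm F w ^ q)) x ^ (p / q) :=
          lintegral_const_mul' _ _ (ENNReal.rpow_ne_top_of_nonneg hp0.le hct)
      _ ≤ c ^ p * (K * J) := by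
          gcongr
          refine (hmax (fun w => gradNorm F w ^ q) (hgc.measurable.pow_const q)
            (fun x => Real.rpow_nonneg (hg0 x) q)).trans (le_of_eq ?_)
          congr 2 with x
          rw [← Real.rpow_mul (hg0 x), mul_div_cancel₀ _ hq0.ne']
  have hI0 : 0 ≤ ∫ x, gradNorm F x ^ p :=
    integral_nonneg fun x => Real.rpow_nonneg (hg0 x) p
  calc _ ≤ (c ^ p * (K * J)) ^ (1 / p) := by gcongr
    _ = c * K ^ (1 / p) * J ^ (1 / p) := by
        rw [ENNReal.mul_rpow_of_nonneg _ _ (by positivity),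
          ENNReal.mul_rpow_of_nonneg _ _ (by positivity), ← ENNReal.rpow_mul,
          mul_one_div_cancel hp0.ne', ENNReal.rpow_one, mul_assoc]
    _ ≤ ENNReal.ofReal ((c * K ^ (1 / p)).toReal + 1) * J ^ (1 / p) := by
        gcongr
        exact (ENNReal.le_ofReal_iff_toReal_le hCt (by positivity)).2 (by linarith)
    _ = _ := by
        rw [← hJI, ENNReal.ofReal_rpow_of_nonneg hI0 (by positivity),
          ← ENNReal.ofReal_mul (by positivity)]
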